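/- Let Φ : X → B be a functor which is both a fibration and a cofibration of categories, and assume that B is cocomplete and that every fiber X_I of Φ is cocomplete. Then X admits colimits of all diagrams indexed by small connected categories. -/

import Mathlib

/-!
Let `F : C ⥤ 𝒳` and let `I` be the colimit of `F ⋙ Φ` in the base. Cocartesian liftings
`F j ⟶ G j` of the colimit legs `Φ (F j) ⟶ I` assemble into a diagram `G : C ⥤ Φ.Fiber I`
(`pushFunctor`). Its colimit `L` in the fiber, with the composites `F j ⟶ G j ⟶ L`, is a colimit
of `F`. Indeed, a cocone `s` on `F` determines `u : I ⟶ Φ s.pt`; with a cartesian lifting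
`κ : Y ⟶ s.pt` of `u`, morphisms `L ⟶ s.pt` over `u` are the same as morphisms `L ⟶ Y` in the fiber
over `I`, hence as cocones `G ⟶ Y`, hence (as `F j ⟶ G j` is cocartesian) as cocones
`F ⟶ s.pt` over `u`. The universal property of `I` forces every mediating morphism to lie
over `u`.

Fibers are only given by equalities `Φ.obj a = I`, so all computations are phrased with
`Functor.IsHomLift` and Mathlib's strongly (co)cartesian morphisms.
-/

open CategoryTheory CategoryTheory.Functor CategoryTheory.Limits

universe v u

variable {𝒳 : Type u} {𝒮 : Type u} [Category.{v} 𝒳] [Category.{v} 𝒮]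

/-- Cartesian morphism with respect to `Φ`. -/
def IsCartesianMor (Φ : 𝒳 ⥤ 𝒮) {Y X : 𝒳} (φ : Y ⟶ X) : Prop :=
  ∀ ⦃Z : 𝒳⦄ (θ : Z ⟶ X) (v : Φ.obj Z ⟶ Φ.obj Y),
    Φ.map θ = v ≫ Φ.map φ → ∃! ψ : Z ⟶ Y, Φ.map ψ = v ∧ θ = ψ ≫ φ

/-- Cocartesian morphism with respect to `Φ`. -/
def IsCocartesianMor (Φ : 𝒳 ⥤ 𝒮) {Z Y : 𝒳} (ψ : Z ⟶ Y) : Prop :=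
  ∀ ⦃X : 𝒳⦄ (θ : Z ⟶ X) (u : Φ.obj Y ⟶ Φ.obj X),
    Φ.map θ = Φ.map ψ ≫ u → ∃! φ : Y ⟶ X, Φ.map φ = u ∧ θ = ψ ≫ φ

/-- `Φ` is a *fibration* if cartesian liftings exist along every morphism of the base. -/
def IsFibrationMor (Φ : 𝒳 ⥤ 𝒮) : Prop :=
  ∀ (X : 𝒳) ⦃J : 𝒮⦄ (u : J ⟶ Φ.obj X),
    ∃ (Y : 𝒳) (φ : Y ⟶ X), Φ.IsHomLift u φ ∧ IsCartesianMor Φ φ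

/-- `Φ` is a *cofibration* if cocartesian liftings exist along every morphism of the base. -/
def IsCofibrationMor (Φ : 𝒳 ⥤ 𝒮) : Prop :=
  ∀ (Z : 𝒳) ⦃J : 𝒮⦄ (v : Φ.obj Z ⟶ J),
    ∃ (Y : 𝒳) (ψ : Z ⟶ Y), Φ.IsHomLift v ψ ∧ IsCocartesianMor Φ ψ

lemma IsCartesianMor.isStronglyCartesian {Φ : 𝒳 ⥤ 𝒮} {Y X : 𝒳} {φ : Y ⟶ X}
    (h : IsCartesianMor Φ φ) {R S : 𝒮} (u : R ⟶ S) [Φ.IsHomLift u φ] :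
    Φ.IsStronglyCartesian u φ where
  universal_property' := by
    intro Z g θ hθ
    subst_hom_lift Φ u φ
    obtain ⟨ψ, ⟨h₁, h₂⟩, h₃⟩ := h θ g (IsHomLift.eq_of_isHomLift Φ (g ≫ Φ.map φ) θ).symm
    refine ⟨ψ, ⟨h₁ ▸ inferInstance, h₂.symm⟩, ?_⟩
    rintro χ ⟨hχ, e⟩
    exact h₃ χ ⟨(IsHomLift.eq_of_isHomLift Φ g χ).symm, e.symm⟩

lemma IsCocartesianMor.isStronglyCocartesian {Φ : 𝒳 ⥤ 𝒮} {Z Y : 𝒳} {ψ : Z ⟶ Y}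
    (h : IsCocartesianMor Φ ψ) {R S : 𝒮} (u : R ⟶ S) [Φ.IsHomLift u ψ] :
    Φ.IsStronglyCocartesian u ψ where
  universal_property' := by
    intro X g θ hθ
    subst_hom_lift Φ u ψ
    obtain ⟨φ, ⟨h₁, h₂⟩, h₃⟩ := h θ g (IsHomLift.eq_of_isHomLift Φ (Φ.map ψ ≫ g) θ).symm
    refine ⟨φ, ⟨h₁ ▸ inferInstance, h₂.symm⟩, ?_⟩
    rintro χ ⟨hχ, e⟩
    exact h₃ χ ⟨(IsHomLift.eq_of_isHomLift Φ g χ).symm, e.symm⟩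

section Push

variable {C : Type v} [SmallCategory C] {Φ : 𝒳 ⥤ 𝒮} {F : C ⥤ 𝒳} (c : Cocone (F ⋙ Φ))

/-- The leg of a cocone on `F ⋙ Φ`, with source and target in simplified form. -/
abbrev leg (j : C) : Φ.obj (F.obj j) ⟶ c.pt := c.ι.app j

lemma map_leg {i j : C} (f : i ⟶ j) : Φ.map (F.map f) ≫ leg c j = leg c i := c.w f

variable (G : C → 𝒳) (η : ∀ j, F.obj j ⟶ G j)
  [hη : ∀ j, Φ.IsStronglyCocartesian (leg c j) (η j)]

/-- The transition morphism `G i ⟶ G j` over `𝟙 c.pt` induced by `F.map f`. -/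
noncomputable def pushMap {i j : C} (f : i ⟶ j) : G i ⟶ G j :=
  IsStronglyCocartesian.map Φ (leg c i) (η i) (g := 𝟙 c.pt)
    (f' := Φ.map (F.map f) ≫ leg c j) (by simp [map_leg]) (F.map f ≫ η j)

instance instIsHomLiftPushMap {i j : C} (f : i ⟶ j) : Φ.IsHomLift (𝟙 c.pt) (pushMap c G η f) := by
  unfold pushMap; infer_instance

lemma comp_pushMap {i j : C} (f : i ⟶ j) : η i ≫ pushMap c G η f = F.map f ≫ η j :=
  IsStronglyCocartesian.fac ..

lemma pushMap_id (j : C) : pushMap c G η (𝟙 j) = 𝟙 (G j) := by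
  have := IsHomLift.id (IsHomLift.codomain_eq Φ (leg c j) (η j))
  apply IsStronglyCocartesian.ext Φ (leg c j) (η j) (𝟙 c.pt)
  simp [comp_pushMap]

lemma pushMap_comp {i j k : C} (f : i ⟶ j) (g : j ⟶ k) :
    pushMap c G η (f ≫ g) = pushMap c G η f ≫ pushMap c G η g := by
  apply IsStronglyCocartesian.ext Φ (leg c i) (η i) (𝟙 c.pt)
  rw [comp_pushMap, ← Category.assoc, comp_pushMap, Category.assoc, comp_pushMap]
  simp

/-- The diagram in the fiber over `c.pt` obtained from `F` by pushing each `F j` forward along the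
leg `Φ (F j) ⟶ c.pt`. -/
noncomputable def pushFunctor : C ⥤ Φ.Fiber c.pt where
  obj j := Fiber.mk (a := G j) (IsHomLift.codomain_eq Φ (leg c j) (η j))
  map f := Subtype.mk (pushMap c G η f) (instIsHomLiftPushMap c G η f)
  map_id j := Subtype.ext (pushMap_id c G η j)
  map_comp f g := Subtype.ext (pushMap_comp c G η f g)

variable {G η}
variable (d : Cocone (pushFunctor c G η))

/-- The vertex of a cocone in the fiber, as an object of the total category. -/
def pushPt : 𝒳 := Fiber.fiberInclusion.obj d.pt

lemma obj_pushPt : Φ.obj (pushPt c d) = c.pt := d.pt.2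

/-- The legs of a cocone on `pushFunctor`, as morphisms of the total category. -/
noncomputable def pushLeg (j : C) : G j ⟶ pushPt c d := Fiber.fiberInclusion.map (d.ι.app j)

instance instIsHomLiftPushLeg (j : C) : Φ.IsHomLift (𝟙 c.pt) (pushLeg c d j) := (d.ι.app j).2

lemma pushMap_pushLeg {i j : C} (f : i ⟶ j) :
    pushMap c G η f ≫ pushLeg c d j = pushLeg c d i :=
  congrArg Subtype.val (d.w f)

/-- The universal property of a colimit in the fiber, unbundled in terms of morphisms of the total
category lying over the identity. -/
lemma existsUnique_fiber_desc {d : Cocone (pushFunctor c G η)} (hd : IsColimit d) {Y : 𝒳}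
    (hY : Φ.obj Y = c.pt) (α : ∀ j, G j ⟶ Y) (hα : ∀ j, Φ.IsHomLift (𝟙 c.pt) (α j))
    (hw : ∀ ⦃i j : C⦄ (f : i ⟶ j), pushMap c G η f ≫ α j = α i) :
    ∃! δ : pushPt c d ⟶ Y, Φ.IsHomLift (𝟙 c.pt) δ ∧ ∀ j, pushLeg c d j ≫ δ = α j := by
  let t : Cocone (pushFunctor c G η) :=
    { pt := Fiber.mk hY
      ι :=
        { app := fun j => Subtype.mk (α j) (hα j)
          naturality := fun i j f =>
            Subtype.ext ((hw f).trans (Category.comp_id (α i)).symm) } }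
  refine ⟨(hd.desc t).1, ⟨(hd.desc t).2, fun j => congrArg Subtype.val (hd.fac t j)⟩, ?_⟩
  rintro δ ⟨hδ, e⟩
  exact congrArg Subtype.val (hd.uniq t (Subtype.mk δ hδ) fun j => Subtype.ext (e j))

/-- A cocone on the pushed-forward diagram in the fiber gives a cocone on `F` by precomposing with
the cocartesian morphisms `η`. -/
noncomputable def pushCocone : Cocone F where
  pt := pushPt c d
  ι :=
    { app := fun j => η j ≫ pushLeg c d j
      naturality := fun i j f => by
        change F.map f ≫ η j ≫ pushLeg c d j = (η i ≫ pushLeg c d i) ≫ 𝟙 _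
        rw [← pushMap_pushLeg c d f, Category.comp_id, ← Category.assoc, ← comp_pushMap c,
          Category.assoc] }

/-- Morphisms out of the pushed-forward cocone lie over the morphism induced by the colimit in the
base. -/
lemma isHomLift_desc (hc : IsColimit c) (s : Cocone F)
    (m : pushPt c d ⟶ s.pt) (hm : ∀ j, (η j ≫ pushLeg c d j) ≫ m = s.ι.app j) :
    Φ.IsHomLift (hc.desc (Φ.mapCocone s)) m := by
  have key : eqToHom (obj_pushPt c d).symm ≫ Φ.map m = hc.desc (Φ.mapCocone s) := by
    refine hc.uniq (Φ.mapCocone s) _ fun j => ?_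
    have h := IsHomLift.fac Φ (leg c j) (η j ≫ pushLeg c d j)
    change leg c j ≫ _ = Φ.map (s.ι.app j)
    rw [← hm j, h]
    simp
  rw [← key]
  exact IsHomLift.lift_eqToHom_comp Φ (Φ.map m) m (obj_pushPt c d).symm

/-- The universal property of the pushed-forward colimit: existence comes from a cartesian lifting
of the induced morphism in the base. -/
lemma existsUnique_desc (hfib : IsFibrationMor Φ) (hc : IsColimit c)
    {d : Cocone (pushFunctor c G η)} (hd : IsColimit d) (s : Cocone F) :
    ∃! m : pushPt c d ⟶ s.pt, ∀ j, (η j ≫ pushLeg c d j) ≫ m = s.ι.app j := by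
  let u : c.pt ⟶ Φ.obj s.pt := hc.desc (Φ.mapCocone s)
  have hu (j : C) : Φ.map (s.ι.app j) = leg c j ≫ u := (hc.fac (Φ.mapCocone s) j).symm
  obtain ⟨Y, κ, hκ, hκ'⟩ := hfib s.pt u
  have := hκ'.isStronglyCartesian u
  -- `F j ⟶ s.pt` factors through the cocartesian `η j` over `u`, then through the cartesian `κ`
  -- over the identity.
  have hex (j : C) : ∃ α : G j ⟶ Y, Φ.IsHomLift (𝟙 c.pt) α ∧ η j ≫ α ≫ κ = s.ι.app j := by
    let β : G j ⟶ s.pt := IsStronglyCocartesian.map Φ (leg c j) (η j) (hu j) (s.ι.app j)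
    refine ⟨IsStronglyCartesian.map Φ u κ (Category.id_comp u).symm β, inferInstance, ?_⟩
    rw [IsStronglyCartesian.fac]
    exact IsStronglyCocartesian.fac ..
  choose α hα hα' using hex
  obtain ⟨δ, ⟨hδ, hfac⟩, huniq⟩ := existsUnique_fiber_desc c hd
    (IsHomLift.domain_eq Φ u κ) α hα fun i j f => by
      apply IsStronglyCartesian.ext Φ u κ (𝟙 c.pt)
      apply IsStronglyCocartesian.ext Φ (leg c i) (η i) u
      rw [hα', ← Category.assoc, ← Category.assoc, comp_pushMap, Category.assoc,
        Category.assoc, hα', s.w]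
  refine ⟨δ ≫ κ, fun j => ?_, fun m hm => ?_⟩
  · rw [← hα' j, ← hfac j]
    simp only [Category.assoc]
  · have hmu : Φ.IsHomLift u m := isHomLift_desc c d hc s m hm
    let μ : pushPt c d ⟶ Y := IsStronglyCartesian.map Φ u κ (Category.id_comp u).symm m
    have hμκ : μ ≫ κ = m := IsStronglyCartesian.fac ..
    have e : μ = δ := by
      refine huniq μ ⟨inferInstance, fun j => ?_⟩
      apply IsStronglyCartesian.ext Φ u κ (𝟙 c.pt)
      apply IsStronglyCocartesian.ext Φ (leg c j) (η j) u
      rw [hα', Category.assoc, hμκ, ← Category.assoc]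
      exact hm j
    rw [← hμκ, e]

end Push

/-- if `Φ : 𝒳 ⥤ 𝒮` is both a fibration and a cofibration, the base `𝒮` is
cocomplete and every fiber `𝒳_I` is cocomplete, then `𝒳` admits colimits of all diagrams
indexed by small connected categories. -/
theorem stmt_17 (Φ : 𝒳 ⥤ 𝒮) (hfib : IsFibrationMor Φ) (hcofib : IsCofibrationMor Φ)
    [HasColimits 𝒮] (hfibres : ∀ I : 𝒮, HasColimits (Φ.Fiber I))
    (C : Type v) [SmallCategory C] [IsConnected C] :
    HasColimitsOfShape C 𝒳 := by
  refine ⟨fun F => ?_⟩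
  let c := colimit.cocone (F ⋙ Φ)
  have hc : IsColimit c := colimit.isColimit _
  choose G η hη hη' using fun j => hcofib (F.obj j) (leg c j)
  have (j : C) : Φ.IsStronglyCocartesian (leg c j) (η j) := (hη' j).isStronglyCocartesian _
  have := hfibres c.pt
  have hd := colimit.isColimit (pushFunctor c G η)
  exact ⟨⟨⟨pushCocone c _, IsColimit.ofExistsUnique
    fun s => existsUnique_desc c hfib hc hd s⟩⟩⟩
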